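/- Global controllability of the double forced periodic multiparticle system: Assume Φ is admissible. Consider the periodic multiparticle system with two controlling forces applied to particles P₁ and Pₙ, i.e. q̇_k = p_k for k = 1,…,n, ṗ_k = φ(q_{k−1}−q_k) − φ(q_k−q_{k+1}) for k = 2,…,n−1, ṗ₁ = φ(qₙ−q₁) − φ(q₁−q₂) + u(t), ṗₙ = φ(q_{n−1}−qₙ) − φ(qₙ−q₁) + v(t). Then for every pair of points x̃, x̂ ∈ ℝ^{2n} there exist a time θ > 0, measurable essentially bounded controls u, v : [0,θ] → ℝ, and an absolutely continuous solution of this system steering x̃ at time 0 to x̂ at time θ. -/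

import Mathlib

open scoped BigOperators
open MeasureTheory Filter Set

noncomputable section

/-- The state space ℝ^{2n}, with coordinates (q,p). -/
abbrev State (n : ℕ) := (Fin n → ℝ) × (Fin n → ℝ)

/-- The drift vector field of the periodic multiparticle system,
`f(q,p) = Σ p_k ∂/∂q_k + Σ (φ(q_{k-1}-q_k) - φ(q_k-q_{k+1})) ∂/∂p_k` with `φ = Φ'`,
with cyclic indexing in `Fin n`. -/
def drift (n : ℕ) [NeZero n] (Φ : ℝ → ℝ) (x : State n) : State n :=
  (x.2, fun k => deriv Φ (x.1 (k - 1) - x.1 k) - deriv Φ (x.1 k - x.1 (k + 1)))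

/-- The momentum coordinate vector `e_{p_j} = ∂/∂p_j`. -/
def ep (n : ℕ) [NeZero n] (j : Fin n) : State n := (0, Pi.single j 1)

/-- The position coordinate vector `e_{q_j} = ∂/∂q_j`. -/
def eq' (n : ℕ) [NeZero n] (j : Fin n) : State n := (Pi.single j 1, 0)

/-- `Φ` is admissible: real analytic, bounded below, and `Φ(y) → +∞` as `y → +∞`. -/
def Admissible (Φ : ℝ → ℝ) : Prop :=
  (∀ x, AnalyticAt ℝ Φ x) ∧ BddBelow (Set.range Φ) ∧ Tendsto Φ atTop atTop

/-- `Φ` is generic: for no `b` is `Φ''` even or odd about `b`. -/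
def Generic (Φ : ℝ → ℝ) : Prop :=
  ∀ b : ℝ,
    (¬ ∀ t : ℝ, deriv (deriv Φ) (b + t) = deriv (deriv Φ) (b - t)) ∧
    (¬ ∀ t : ℝ, deriv (deriv Φ) (b + t) = - deriv (deriv Φ) (b - t))

/-- Lie bracket of vector fields: `[X,Y](x) = DY(x)·X(x) − DX(x)·Y(x)`. -/
def lieBracket {n : ℕ} (X Y : State n → State n) : State n → State n :=
  fun x => fderiv ℝ Y x (X x) - fderiv ℝ X x (Y x)

/-- Admissible trajectory of the single forced system `ẋ = f(x) + u(t) g`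
(in absolutely-continuous/integral form). -/
def IsTrajectory (n : ℕ) [NeZero n] (Φ : ℝ → ℝ) (θ : ℝ) (u : ℝ → ℝ)
    (x : ℝ → State n) : Prop :=
  ContinuousOn x (Set.Icc 0 θ) ∧
  ∀ t ∈ Set.Icc 0 θ,
    x t = x 0 + ∫ s in (0:ℝ)..t, (drift n Φ (x s) + u s • ep n 0)

/-- Admissible trajectory of the double forced periodic system
`ẋ = f(x) + u(t) ∂/∂p₁ + v(t) ∂/∂pₙ` (in absolutely-continuous/integral form). -/
def IsTrajectory2 (n : ℕ) [NeZero n] (Φ : ℝ → ℝ) (θ : ℝ) (u v : ℝ → ℝ)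
    (x : ℝ → State n) : Prop :=
  ContinuousOn x (Set.Icc 0 θ) ∧
  ∀ t ∈ Set.Icc 0 θ,
    x t = x 0 + ∫ s in (0:ℝ)..t,
      (drift n Φ (x s) + u s • ep n 0 + v s • ep n (-1))

/-!
A feedback of the two controls turns the ring into a damped chain: it cancels the force between
`Pₙ` and `P₁`, adds friction at both ends, ties `P₁` to the origin and compresses the chain with
force `l exp (qₙ - q₁)`. The energy of the closed loop is proper, so by LaSalle's principle
every state can be steered arbitrarily close to an equilibrium, and for all but countably many `l`
the force of each bond is a local diffeomorphism of the gap at every equilibrium.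

The open chain is flat: the positions of `P₁` and `P₂` determine `q₃, …, qₙ` through the equations
of motion of `P₂, …, Pₙ₋₁`, solved with local inverses of `φ`. Prescribing `q₁` and `q₂` as a
closed-loop motion that is smoothly switched off steers a neighbourhood of a regular equilibrium
exactly to it. Hence every state is steered to a state of rest, and so are all nearby states.

Reversal of the momenta reverses trajectories and fixes the states of rest. Reachability is thus an
equivalence relation with open classes on the connected set of states of rest, so all of these
communicate, and a reversed trajectory leads from a state of rest to any prescribed state.
-/

open scoped Topology ContDiff

/-! ### The cyclic index set -/

section CyclicIndex

lemma castSucc_ne_neg_one {m : ℕ} (i : Fin m) : i.castSucc ≠ -1 := fun h => by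
  have hval := congrArg Fin.val h
  rw [Fin.coe_neg_one, Fin.val_castSucc] at hval
  omega

variable {n : ℕ} [NeZero n]

lemma val_neg_one : (-1 : Fin n).val = n - 1 := by
  obtain ⟨m, rfl⟩ := Nat.exists_eq_succ_of_ne_zero (NeZero.ne n)
  exact Fin.coe_neg_one

lemma val_add_one_of_ne_neg_one {k : Fin n} (hk : k ≠ -1) : (k + 1).val = k.val + 1 := by
  have hval : k.val ≠ n - 1 := fun h => hk (Fin.ext (h.trans val_neg_one.symm))
  exact Fin.val_add_one_of_lt' (by omega)

lemma zero_ne_neg_one (hn : 2 ≤ n) : (0 : Fin n) ≠ -1 := fun h => by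
  have hval := congrArg Fin.val h
  rw [val_neg_one, Fin.val_zero] at hval
  omega

lemma add_one_ne_zero_of_ne_neg_one {k : Fin n} (hk : k ≠ -1) : k + 1 ≠ 0 :=
  fun h => hk (eq_neg_of_add_eq_zero_left h)

lemma sub_one_ne_neg_one_of_ne_zero {k : Fin n} (hk : k ≠ 0) : k - 1 ≠ -1 :=
  fun h => hk (sub_eq_neg_self.1 h)

lemma fin_chain_induction {P : Fin n → Prop} (zero : P 0)
    (add_one : ∀ k, k ≠ -1 → P k → P (k + 1)) (k : Fin n) : P k := by
  obtain ⟨m, rfl⟩ := Nat.exists_eq_succ_of_ne_zero (NeZero.ne n)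
  induction k using Fin.induction with
  | zero => exact zero
  | succ i ih =>
    rw [← Fin.coeSucc_eq_succ]
    exact add_one _ (castSucc_ne_neg_one i) ih

lemma sum_add_one {M : Type*} [AddCommMonoid M] (f : Fin n → M) : ∑ k, f (k + 1) = ∑ k, f k :=
  Equiv.sum_comp (Equiv.addRight 1) f

lemma sum_mul_sub_add_sum_mul_sub {R : Type*} [CommRing R] (p b : Fin n → R) :
    ∑ k, p k * (b (k - 1) - b k) + ∑ k, b k * (p k - p (k + 1)) = 0 := by
  have hshift : ∑ k, p k * b (k - 1) = ∑ k, b k * p (k + 1) := by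
    rw [← sum_add_one]
    simp only [add_sub_cancel_right, mul_comm]
  simp only [mul_sub, Finset.sum_sub_distrib, hshift, mul_comm (b _) (p _)]
  ring

end CyclicIndex

/-! ### Perturbation of the initial point of an ODE -/

section ODE

variable {E : Type*} [NormedAddCommGroup E] [NormedSpace ℝ E]

lemma exists_lipschitzWith_bounded_eqOn_closedBall {E' : Type*} [NormedAddCommGroup E']
    [NormedSpace ℝ E'] [FiniteDimensional ℝ E] {F : E → E'} (hF : ContDiff ℝ 1 F) (r : ℝ) :
    ∃ G : E → E', (∃ K, LipschitzWith K G) ∧ (∃ B, ∀ x, ‖G x‖ ≤ B) ∧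
      EqOn G F (Metric.closedBall 0 r) := by
  let χ : ContDiffBump (0 : E) := ⟨|r| + 1, |r| + 2, by positivity, by linarith⟩
  have hsmooth : ContDiff ℝ 1 fun x => χ x • F x := χ.contDiff.smul hF
  have hsupp : HasCompactSupport fun x => χ x • F x := χ.hasCompactSupport.smul_right
  refine ⟨_, hsmooth.lipschitzWith_of_hasCompactSupport hsupp one_ne_zero,
    hsupp.exists_bound_of_continuous hsmooth.continuous, fun x hx => ?_⟩
  have hχ : χ x = 1 := χ.one_of_mem_closedBall
    (Metric.closedBall_subset_closedBall ((le_abs_self r).trans (lt_add_one _).le) hx)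
  simp only [hχ, one_smul]

lemma exists_solution_of_lipschitzWith_of_bounded [CompleteSpace E] {G : E → E} {K : NNReal}
    (hlip : LipschitzWith K G) {B : ℝ} (hB : ∀ x, ‖G x‖ ≤ B) {T : ℝ} (hT : 0 ≤ T) {b : ℝ → E}
    (hb : ContinuousOn b (Icc 0 T)) (x₀ : E) :
    ∃ Y : ℝ → E, Y 0 = x₀ ∧ ∀ t ∈ Icc 0 T, HasDerivWithinAt Y (G (Y t) + b t) (Icc 0 T) t := by
  obtain ⟨B', hB'⟩ := isCompact_Icc.exists_bound_of_continuousOn hb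
  have hB0 : 0 ≤ B := (norm_nonneg _).trans (hB 0)
  have hB'0 : 0 ≤ B' := (norm_nonneg _).trans (hB' 0 ⟨le_rfl, hT⟩)
  have hPL : IsPicardLindelof (fun t x => G x + b t) (⟨0, le_rfl, hT⟩ : Icc 0 T) x₀
      ⟨(B + B') * T, by positivity⟩ 0 ⟨B + B', by positivity⟩ K := by
    refine ⟨fun t _ => ?_, fun x _ => continuousOn_const.add hb, fun t ht x _ => ?_, ?_⟩
    · simpa using (hlip.add (LipschitzWith.const (b t))).lipschitzOnWith
    · exact (norm_add_le _ _).trans (add_le_add (hB x) (hB' t ht))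
    · simp only [sub_zero, sub_self, max_eq_left hT, NNReal.coe_zero]
      exact le_rfl
  exact hPL.exists_eq_forall_mem_Icc_hasDerivWithinAt₀

/-- A cutoff far from the given solution makes the field bounded and Lipschitz, so that solutions
exist up to time `T`; by Grönwall's inequality the nearby ones never notice the cutoff. -/
lemma eventually_exists_solution_dist_lt [FiniteDimensional ℝ E] {F : E → E}
    (hF : ContDiff ℝ 1 F) {T : ℝ} (hT : 0 ≤ T) {b X : ℝ → E} (hb : ContinuousOn b (Icc 0 T))
    (hX : ∀ t ∈ Icc 0 T, HasDerivWithinAt X (F (X t) + b t) (Icc 0 T) t) {ε : ℝ} (hε : 0 < ε) :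
    ∀ᶠ x₀ in 𝓝 (X 0), ∃ Y : ℝ → E, Y 0 = x₀ ∧ ∀ t ∈ Icc 0 T,
      HasDerivWithinAt Y (F (Y t) + b t) (Icc 0 T) t ∧ dist (Y t) (X t) < ε := by
  have : CompleteSpace E := FiniteDimensional.complete ℝ E
  have hXc : ContinuousOn X (Icc 0 T) := fun t ht => (hX t ht).continuousWithinAt
  obtain ⟨M, hM⟩ := isCompact_Icc.exists_bound_of_continuousOn hXc
  obtain ⟨G, ⟨K, hlip⟩, ⟨B, hB⟩, hGF⟩ := exists_lipschitzWith_bounded_eqOn_closedBall hF (M + 1)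
  have hclose : ∀ᶠ x₀ in 𝓝 (X 0), dist x₀ (X 0) * Real.exp (K * T) < min ε 1 := by
    refine ((by fun_prop : Continuous fun x₀ => _).tendsto' _ 0 ?_).eventually_lt_const ?_
    · simp
    · exact lt_min hε one_pos
  filter_upwards [hclose] with x₀ hx₀
  obtain ⟨Y, rfl, hY⟩ := exists_solution_of_lipschitzWith_of_bounded hlip hB hT hb x₀
  have hXG : ∀ t ∈ Icc 0 T, HasDerivWithinAt X (G (X t) + b t) (Icc 0 T) t := fun t ht => by
    rw [hGF (mem_closedBall_zero_iff.2 ((hM t ht).trans (lt_add_one M).le))]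
    exact hX t ht
  have hright : ∀ {Z Z' : ℝ → E}, (∀ t ∈ Icc 0 T, HasDerivWithinAt Z (Z' t) (Icc 0 T) t) →
      ∀ t ∈ Ico 0 T, HasDerivWithinAt Z (Z' t) (Ici t) t := fun hZ t ht =>
    (hZ t (Ico_subset_Icc_self ht)).mono_of_mem_nhdsWithin
      (mem_of_superset (Icc_mem_nhdsGE ht.2) (Icc_subset_Icc_left ht.1))
  have hdist : ∀ t ∈ Icc 0 T, dist (Y t) (X t) < min ε 1 := fun t ht => by
    have hlip' : ∀ t, LipschitzWith K fun x => G x + b t := fun t => by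
      simpa using hlip.add (LipschitzWith.const (b t))
    refine (dist_le_of_trajectories_ODE hlip' (fun t ht => (hY t ht).continuousWithinAt)
      (hright hY) hXc (hright hXG) le_rfl t ht).trans_lt (hx₀.trans_le' ?_)
    gcongr
    linarith [ht.2]
  refine ⟨Y, rfl, fun t ht => ⟨?_, (hdist t ht).trans_le (min_le_left _ _)⟩⟩
  have hYM : ‖Y t‖ ≤ M + 1 := by
    linarith [hM t ht, norm_le_norm_add_norm_sub (X t) (Y t), dist_eq_norm (Y t) (X t),
      norm_sub_rev (X t) (Y t), (hdist t ht).trans_le (min_le_right _ _)]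
  rw [← hGF (mem_closedBall_zero_iff.2 hYM)]
  exact hY t ht

end ODE

/-! ### Control steps and reachability -/

section Reach

variable {n : ℕ}

/-- Reversal of the momenta, which turns trajectories run backwards into trajectories. -/
def timeReversal (n : ℕ) : State n →L[ℝ] State n :=
  (ContinuousLinearMap.fst ℝ _ _).prod (-ContinuousLinearMap.snd ℝ _ _)

lemma timeReversal_apply (x : State n) : timeReversal n x = (x.1, -x.2) := rfl

lemma timeReversal_timeReversal (x : State n) : timeReversal n (timeReversal n x) = x := by
  simp [timeReversal_apply]

variable [NeZero n] {Φ : ℝ → ℝ}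

/-- The directions in which the controls act: the momenta of the first and of the last particle. -/
def controlSpace (n : ℕ) [NeZero n] : Submodule ℝ (State n) where
  carrier := {w | w.1 = 0 ∧ ∀ k, k ≠ 0 → k ≠ -1 → w.2 k = 0}
  zero_mem' := by simp
  add_mem' ha hb := ⟨by simp [ha.1, hb.1], fun k h0 h1 => by simp [ha.2 k h0 h1, hb.2 k h0 h1]⟩
  smul_mem' c a ha := ⟨by simp [ha.1], fun k h0 h1 => by simp [ha.2 k h0 h1]⟩

lemma eq_smul_ep_add_smul_ep (hn : 2 ≤ n) {w : State n} (hw : w ∈ controlSpace n) :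
    w.2 0 • ep n 0 + w.2 (-1) • ep n (-1) = w := by
  have hne := zero_ne_neg_one hn
  refine Prod.ext (by simp [ep, hw.1]) (funext fun k => ?_)
  rcases eq_or_ne k 0 with rfl | hk
  · simp [ep, hne]
  rcases eq_or_ne k (-1) with rfl | hk'
  · simp [ep, hne.symm]
  · simp [ep, hk, hk', hw.2 k hk hk']

/-- `b` is reached from `a` along a single trajectory with a continuous control. -/
def Step (Φ : ℝ → ℝ) (a b : State n) : Prop :=
  ∃ T > 0, ∃ w x : ℝ → State n, ContinuousOn w (Icc 0 T) ∧
    (∀ t ∈ Icc 0 T, w t ∈ controlSpace n ∧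
      HasDerivWithinAt x (drift n Φ (x t) + w t) (Icc 0 T) t) ∧
    x 0 = a ∧ x T = b

/-- `b` is reached from `a` along finitely many trajectories with continuous controls. -/
def Reach (Φ : ℝ → ℝ) : State n → State n → Prop :=
  Relation.ReflTransGen (Step Φ)

lemma drift_timeReversal (x : State n) :
    drift n Φ (timeReversal n x) = -timeReversal n (drift n Φ x) := by
  simp [timeReversal_apply, drift]

lemma timeReversal_of_mem_controlSpace {w : State n} (hw : w ∈ controlSpace n) :
    timeReversal n w = -w := by
  simp [timeReversal_apply, Prod.ext_iff, hw.1]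

lemma Step.reverse {a b : State n} (h : Step Φ a b) :
    Step Φ (timeReversal n b) (timeReversal n a) := by
  obtain ⟨T, hT, w, x, hw, hx, rfl, rfl⟩ := h
  have hmap : MapsTo (fun t : ℝ => T - t) (Icc 0 T) (Icc 0 T) := fun t ht =>
    ⟨sub_nonneg.2 ht.2, sub_le_self T ht.1⟩
  refine ⟨T, hT, fun t => w (T - t), fun t => timeReversal n (x (T - t)),
    hw.comp (by fun_prop) hmap, fun t ht => ?_, by simp, by simp⟩
  obtain ⟨hmem, hd⟩ := hx (T - t) (hmap ht)
  have hsub : HasDerivWithinAt (fun t => T - t) (-1) (Icc 0 T) t := by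
    simpa using (hasDerivWithinAt_id t (Icc 0 T)).const_sub T
  have hrev := (timeReversal n).hasFDerivAt.comp_hasDerivWithinAt t (hd.scomp t hsub hmap)
  rw [neg_smul, one_smul, map_neg, map_add, timeReversal_of_mem_controlSpace hmem,
    neg_add, neg_neg, ← drift_timeReversal] at hrev
  exact ⟨hmem, hrev⟩

lemma Reach.reverse {a b : State n} (h : Reach Φ a b) :
    Reach Φ (timeReversal n b) (timeReversal n a) := by
  induction h with
  | refl => exact .refl
  | tail _ h ih => exact .head h.reverse ih

lemma contDiff_drift {m : WithTop ℕ∞} (hφ : ContDiff ℝ m (deriv Φ)) :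
    ContDiff ℝ m (drift n Φ) := by
  unfold drift
  fun_prop

lemma step_of_hasDerivWithinAt (hφ : Continuous (deriv Φ)) {T : ℝ} (hT : 0 < T)
    {x x' : ℝ → State n} (hx' : ContinuousOn x' (Icc 0 T))
    (hx : ∀ t ∈ Icc 0 T, HasDerivWithinAt x (x' t) (Icc 0 T) t)
    (hmem : ∀ t ∈ Icc 0 T, x' t - drift n Φ (x t) ∈ controlSpace n) : Step Φ (x 0) (x T) := by
  have hdrift : Continuous (drift n Φ) := (contDiff_drift (contDiff_zero.2 hφ)).continuous
  refine ⟨T, hT, fun t => x' t - drift n Φ (x t), x,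
    hx'.sub (hdrift.comp_continuousOn fun t ht => (hx t ht).continuousWithinAt),
    fun t ht => ⟨hmem t ht, ?_⟩, rfl, rfl⟩
  simpa using hx t ht

lemma Step.eventually (hφ : ContDiff ℝ 1 (deriv Φ)) {a b : State n} (h : Step Φ a b)
    {V : Set (State n)} (hV : V ∈ 𝓝 b) : ∀ᶠ a' in 𝓝 a, ∃ b' ∈ V, Step Φ a' b' := by
  obtain ⟨T, hT, w, x, hw, hx, rfl, rfl⟩ := h
  obtain ⟨ε, hε, hεV⟩ := Metric.mem_nhds_iff.1 hV
  filter_upwards [eventually_exists_solution_dist_lt (contDiff_drift hφ) hT.le hw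
    (fun t ht => (hx t ht).2) hε]
  rintro _ ⟨Y, rfl, hY⟩
  exact ⟨Y T, hεV (hY T ⟨hT.le, le_rfl⟩).2, T, hT, w, Y, hw,
    fun t ht => ⟨(hx t ht).1, (hY t ht).1⟩, rfl, rfl⟩

lemma Reach.eventually (hφ : ContDiff ℝ 1 (deriv Φ)) {a b : State n} (h : Reach Φ a b)
    {V : Set (State n)} (hV : V ∈ 𝓝 b) : ∀ᶠ a' in 𝓝 a, ∃ b' ∈ V, Reach Φ a' b' := by
  induction h generalizing V with
  | refl => exact eventually_of_mem hV fun a' ha' => ⟨a', ha', .refl⟩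
  | tail _ h ih =>
    filter_upwards [ih (h.eventually hφ hV)]
    rintro a' ⟨c, ⟨b', hb', hcb⟩, hac⟩
    exact ⟨b', hb', hac.tail hcb⟩

lemma Step.mem_closure_reach (hφ : ContDiff ℝ 1 (deriv Φ)) {x y z : State n} (h : Step Φ y z)
    (hy : y ∈ closure {y | Reach Φ x y}) : z ∈ closure {z | Reach Φ x z} := by
  refine mem_closure_iff_nhds.2 fun V hV => ?_
  obtain ⟨y', ⟨z', hz'V, hstep⟩, hy'⟩ := mem_closure_iff_nhds.1 hy _ (h.eventually hφ hV)
  exact ⟨z', hz'V, hy'.tail hstep⟩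

end Reach

/-! ### From steps to bounded controls -/

section IntegralPath

variable {E : Type*} [NormedAddCommGroup E] [NormedSpace ℝ E] {g g₁ g₂ x x₁ x₂ : ℝ → E}
  {θ θ₁ θ₂ : ℝ}

/-- `x` is an absolutely continuous path on `[0, θ]` with velocity `g`, in integral form. -/
def IsIntegralPath (θ : ℝ) (g x : ℝ → E) : Prop :=
  IntervalIntegrable g volume 0 θ ∧ ∀ t ∈ Icc 0 θ, x t = x 0 + ∫ s in (0 : ℝ)..t, g s

/-- The function `f` up to time `θ`, followed by `g` restarted at time `θ`. -/
def concat {α : Type*} (θ : ℝ) (f g : ℝ → α) (t : ℝ) : α :=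
  if t ≤ θ then f t else g (t - θ)

lemma forall_concat {α : Type*} {f g : ℝ → α} {p : α → Prop} (hf : ∀ t, p (f t))
    (hg : ∀ t, p (g t)) (t : ℝ) : p (concat θ f g t) := by
  unfold concat
  split_ifs
  exacts [hf _, hg _]

lemma measurable_concat {α : Type*} [MeasurableSpace α] {f g : ℝ → α} (hf : Measurable f)
    (hg : Measurable g) : Measurable (concat θ f g) :=
  Measurable.ite measurableSet_Iic hf (hg.comp (measurable_sub_const θ))

lemma IsIntegralPath.continuousOn (hθ : 0 ≤ θ) (h : IsIntegralPath θ g x) :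
    ContinuousOn x (Icc 0 θ) := by
  have hprim := intervalIntegral.continuousOn_primitive_interval' h.1 left_mem_uIcc
  rw [uIcc_of_le hθ] at hprim
  exact (continuousOn_const.add hprim).congr h.2

lemma IsIntegralPath.congr (hθ : 0 ≤ θ) (h : IsIntegralPath θ g₁ x)
    (hg : EqOn g₁ g₂ (Icc 0 θ)) : IsIntegralPath θ g₂ x := by
  refine ⟨h.1.congr ?_, fun t ht => ?_⟩
  · rw [uIoc_of_le hθ]
    exact hg.mono Ioc_subset_Icc_self
  · rw [h.2 t ht, intervalIntegral.integral_congr]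
    rw [uIcc_of_le ht.1]
    exact hg.mono (Icc_subset_Icc_right ht.2)

lemma isIntegralPath_of_hasDerivWithinAt [CompleteSpace E] (hθ : 0 ≤ θ)
    (hg : ContinuousOn g (Icc 0 θ)) (hx : ∀ t ∈ Icc 0 θ, HasDerivWithinAt x (g t) (Icc 0 θ) t) :
    IsIntegralPath θ g x := by
  refine ⟨hg.intervalIntegrable_of_Icc hθ, fun t ht => ?_⟩
  have hsub : Icc 0 t ⊆ Icc 0 θ := Icc_subset_Icc_right ht.2
  rw [intervalIntegral.integral_eq_sub_of_hasDerivAt_of_le ht.1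
    (fun s hs => (hx s (hsub hs)).continuousWithinAt.mono hsub)
    (fun s hs => (hx s (hsub (Ioo_subset_Icc_self hs))).hasDerivAt
      (Icc_mem_nhds hs.1 (hs.2.trans_le ht.2)))
    ((hg.mono hsub).intervalIntegrable_of_Icc ht.1), add_sub_cancel]

lemma isIntegralPath_concat (hθ₁ : 0 ≤ θ₁) (hθ₂ : 0 ≤ θ₂) (h₁ : IsIntegralPath θ₁ g₁ x₁)
    (h₂ : IsIntegralPath θ₂ g₂ x₂) (hx : x₁ θ₁ = x₂ 0) :
    IsIntegralPath (θ₁ + θ₂) (concat θ₁ g₁ g₂) (concat θ₁ x₁ x₂) := by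
  have hfst : EqOn g₁ (concat θ₁ g₁ g₂) (Icc 0 θ₁) := fun t ht => (if_pos ht.2).symm
  have hsnd {t : ℝ} (ht : θ₁ ≤ t) :
      EqOn (fun s => g₂ (s - θ₁)) (concat θ₁ g₁ g₂) (uIoc θ₁ t) := fun s hs => by
    rw [uIoc_of_le ht] at hs
    exact (if_neg hs.1.not_ge).symm
  have h₁' : IsIntegralPath θ₁ (concat θ₁ g₁ g₂) x₁ := h₁.congr hθ₁ hfst
  have hint : IntervalIntegrable (concat θ₁ g₁ g₂) volume θ₁ (θ₁ + θ₂) := by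
    have hshift := h₂.1.comp_sub_right θ₁
    rw [zero_add, add_comm] at hshift
    exact hshift.congr (hsnd (le_add_of_nonneg_right hθ₂))
  refine ⟨h₁'.1.trans hint, fun t ht => ?_⟩
  have hx0 : concat θ₁ x₁ x₂ 0 = x₁ 0 := if_pos hθ₁
  rcases le_or_gt t θ₁ with hle | hlt
  · rw [hx0, ← h₁'.2 t ⟨ht.1, hle⟩]
    exact if_pos hle
  · have hsub : uIcc θ₁ t ⊆ uIcc θ₁ (θ₁ + θ₂) := by
      rw [uIcc_of_le hlt.le, uIcc_of_le (hlt.le.trans ht.2)]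
      exact Icc_subset_Icc_right ht.2
    calc concat θ₁ x₁ x₂ t = x₂ (t - θ₁) := if_neg hlt.not_ge
      _ = x₁ θ₁ + ∫ s in (0 : ℝ)..(t - θ₁), g₂ s := by
        rw [hx, h₂.2 _ ⟨sub_nonneg.2 hlt.le, sub_le_iff_le_add'.2 ht.2⟩]
      _ = x₁ θ₁ + ∫ s in θ₁..t, concat θ₁ g₁ g₂ s := by
        rw [← intervalIntegral.integral_congr_ae (.of_forall (hsnd hlt.le)),
          intervalIntegral.integral_comp_sub_right, sub_self]
      _ = _ := by
        rw [h₁'.2 θ₁ ⟨hθ₁, le_rfl⟩, hx0, add_assoc,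
          intervalIntegral.integral_add_adjacent_intervals h₁'.1 (hint.mono_set hsub)]

end IntegralPath

lemma exists_measurable_bounded_eqOn {K : Set ℝ} (hK : IsCompact K) {f : ℝ → ℝ}
    (hf : ContinuousOn f K) :
    ∃ u : ℝ → ℝ, Measurable u ∧ (∃ C, ∀ t, |u t| ≤ C) ∧ EqOn u f K := by
  classical
  obtain ⟨C, hC⟩ := hK.exists_bound_of_continuousOn hf
  refine ⟨K.piecewise f 0, hf.measurable_piecewise continuousOn_const hK.measurableSet,
    ⟨max C 0, fun t => ?_⟩, piecewise_eqOn K f 0⟩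
  by_cases ht : t ∈ K
  · rw [piecewise_eq_of_mem _ _ _ ht]
    exact (hC t ht).trans (le_max_left _ _)
  · simp [ht]

section ControlReach

variable {n : ℕ} [NeZero n] {Φ : ℝ → ℝ} {a b c : State n}

/-- `b` is reached from `a` by bounded measurable controls. -/
def ControlReach (Φ : ℝ → ℝ) (a b : State n) : Prop :=
  ∃ θ > 0, ∃ (u v : ℝ → ℝ) (x : ℝ → State n), Measurable u ∧ Measurable v ∧
    (∃ C, ∀ t, |u t| ≤ C) ∧ (∃ C, ∀ t, |v t| ≤ C) ∧
    IsIntegralPath θ (fun s => drift n Φ (x s) + u s • ep n 0 + v s • ep n (-1)) x ∧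
    x 0 = a ∧ x θ = b

lemma bounded_concat {θ : ℝ} {u v : ℝ → ℝ} (hu : ∃ C, ∀ t, |u t| ≤ C)
    (hv : ∃ C, ∀ t, |v t| ≤ C) : ∃ C, ∀ t, |concat θ u v t| ≤ C := by
  obtain ⟨C, hC⟩ := hu
  obtain ⟨D, hD⟩ := hv
  exact ⟨max C D, forall_concat (p := fun y => |y| ≤ max C D)
    (fun t => (hC t).trans (le_max_left _ _)) (fun t => (hD t).trans (le_max_right _ _))⟩

lemma ControlReach.trans (hab : ControlReach Φ a b) (hbc : ControlReach Φ b c) :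
    ControlReach Φ a c := by
  obtain ⟨θ₁, hθ₁, u₁, v₁, x₁, hu₁, hv₁, hbu₁, hbv₁, hx₁, rfl, rfl⟩ := hab
  obtain ⟨θ₂, hθ₂, u₂, v₂, x₂, hu₂, hv₂, hbu₂, hbv₂, hx₂, hx, rfl⟩ := hbc
  refine ⟨θ₁ + θ₂, add_pos hθ₁ hθ₂, concat θ₁ u₁ u₂, concat θ₁ v₁ v₂, concat θ₁ x₁ x₂,
    measurable_concat hu₁ hu₂, measurable_concat hv₁ hv₂, bounded_concat hbu₁ hbu₂,
    bounded_concat hbv₁ hbv₂, ?_, ?_, ?_⟩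
  · convert! isIntegralPath_concat hθ₁.le hθ₂.le hx₁ hx₂ hx.symm using 2 with s
    unfold concat
    split_ifs <;> rfl
  · simp [concat, hθ₁.le]
  · simp [concat, hθ₂.not_ge]

lemma Step.controlReach (hn : 2 ≤ n) (hφ : Continuous (deriv Φ)) (h : Step Φ a b) :
    ControlReach Φ a b := by
  obtain ⟨T, hT, w, x, hw, hx, rfl, rfl⟩ := h
  have hcomp (k : Fin n) : ContinuousOn (fun t => (w t).2 k) (Icc 0 T) :=
    (continuous_apply k).comp_continuousOn hw.snd
  have hxc : ContinuousOn x (Icc 0 T) := fun t ht => (hx t ht).2.continuousWithinAt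
  have hdrift : Continuous (drift n Φ) := contDiff_zero.1 (contDiff_drift (contDiff_zero.2 hφ))
  obtain ⟨u, hu, hbu, huw⟩ := exists_measurable_bounded_eqOn isCompact_Icc (hcomp 0)
  obtain ⟨v, hv, hbv, hvw⟩ := exists_measurable_bounded_eqOn isCompact_Icc (hcomp (-1))
  refine ⟨T, hT, u, v, x, hu, hv, hbu, hbv, ?_, rfl, rfl⟩
  refine (isIntegralPath_of_hasDerivWithinAt hT.le ((hdrift.comp_continuousOn hxc).add hw)
    fun t ht => (hx t ht).2).congr hT.le fun t ht => ?_
  simp only [huw ht, hvw ht, add_assoc, eq_smul_ep_add_smul_ep hn (hx t ht).1]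
  rfl

lemma controlReach_of_transGen (hn : 2 ≤ n) (hφ : Continuous (deriv Φ))
    (h : Relation.TransGen (Step Φ) a b) : ControlReach Φ a b := by
  induction h with
  | single h => exact h.controlReach hn hφ
  | tail _ h ih => exact ih.trans (h.controlReach hn hφ)

end ControlReach

/-! ### The damped closed loop and its energy -/

section ClosedLoop

variable {n : ℕ} [NeZero n] {Φ φ : ℝ → ℝ} {l : ℝ}

/-- The value of `φ` on the bond between particles `k` and `k + 1` of the open chain. The bond
between the last and the first particle, whose force the controls can cancel, is removed. -/
def bond (φ : ℝ → ℝ) (q : Fin n → ℝ) (k : Fin n) : ℝ :=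
  if k = -1 then 0 else φ (q k - q (k + 1))

/-- The forces applied by the feedback: the first particle is attached to the origin by a spring,
the first and the last particle interact through the potential `l * exp (qₙ - q₁)`, and both are
damped. -/
def endForce (l : ℝ) (x : State n) : Fin n → ℝ :=
  Pi.single 0 (l * Real.exp (x.1 (-1) - x.1 0) - x.1 0 - x.2 0) +
    Pi.single (-1) (-(l * Real.exp (x.1 (-1) - x.1 0)) - x.2 (-1))

/-- The closed-loop vector field: the open chain with the feedback `endForce` at its ends. -/
def damped (Φ : ℝ → ℝ) (l : ℝ) (x : State n) : State n :=
  (x.2, fun k => bond (deriv Φ) x.1 (k - 1) - bond (deriv Φ) x.1 k + endForce l x k)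

/-- The energy of the closed loop without damping; it is a Lyapunov function of `damped`. -/
def energy (Φ : ℝ → ℝ) (l : ℝ) (x : State n) : ℝ :=
  ∑ k, x.2 k ^ 2 / 2 + ∑ k, bond Φ x.1 k + (x.1 0 ^ 2 / 2 + l * Real.exp (x.1 (-1) - x.1 0))

lemma bond_neg_one (q : Fin n → ℝ) : bond φ q (-1) = 0 := if_pos rfl

lemma bond_of_ne {k : Fin n} (hk : k ≠ -1) (q : Fin n → ℝ) :
    bond φ q k = φ (q k - q (k + 1)) := if_neg hk

lemma endForce_zero (hn : 2 ≤ n) (x : State n) :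
    endForce l x 0 = l * Real.exp (x.1 (-1) - x.1 0) - x.1 0 - x.2 0 := by
  simp [endForce, zero_ne_neg_one hn]

lemma endForce_neg_one (hn : 2 ≤ n) (x : State n) :
    endForce l x (-1) = -(l * Real.exp (x.1 (-1) - x.1 0)) - x.2 (-1) := by
  simp [endForce, (zero_ne_neg_one hn).symm]

lemma endForce_of_ne {k : Fin n} (hk : k ≠ 0) (hk' : k ≠ -1) (x : State n) :
    endForce l x k = 0 := by
  simp [endForce, hk, hk']

lemma damped_sub_drift_mem_controlSpace (x : State n) :
    damped Φ l x - drift n Φ x ∈ controlSpace n := by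
  refine ⟨sub_self x.2, fun k hk hk' => ?_⟩
  simp [damped, drift, bond_of_ne hk', bond_of_ne (sub_one_ne_neg_one_of_ne_zero hk),
    endForce_of_ne hk hk']

lemma contDiff_bond {m : WithTop ℕ∞} (hφ : ContDiff ℝ m φ) (k : Fin n) :
    ContDiff ℝ m fun x : State n => bond φ x.1 k := by
  unfold bond
  split_ifs <;> fun_prop

lemma contDiff_damped {m : WithTop ℕ∞} (hφ : ContDiff ℝ m (deriv Φ)) (l : ℝ) :
    ContDiff ℝ m (damped Φ l : State n → State n) := by
  refine contDiff_snd.prodMk (contDiff_pi.2 fun k => ?_)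
  refine ((contDiff_bond hφ _).sub (contDiff_bond hφ _)).add (.add ?_ ?_) <;>
    simp only [Pi.single_apply] <;> split_ifs <;> fun_prop

lemma contDiff_energy {m : WithTop ℕ∞} (hΦ : ContDiff ℝ m Φ) (l : ℝ) :
    ContDiff ℝ m (energy Φ l : State n → ℝ) :=
  (ContDiff.add (by fun_prop) (ContDiff.sum fun k _ => contDiff_bond hΦ k)).add (by fun_prop)

lemma step_of_hasDerivWithinAt_damped (hφ : ContDiff ℝ 1 (deriv Φ)) {T : ℝ} (hT : 0 < T)
    {Y : ℝ → State n}
    (hY : ∀ t ∈ Icc 0 T, HasDerivWithinAt Y (damped Φ l (Y t)) (Icc 0 T) t) :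
    Step Φ (Y 0) (Y T) :=
  step_of_hasDerivWithinAt hφ.continuous hT
    ((contDiff_damped hφ l).continuous.comp_continuousOn fun t ht => (hY t ht).continuousWithinAt)
    hY fun _ _ => damped_sub_drift_mem_controlSpace _

omit [NeZero n] in
lemma hasDerivAt_position {X : ℝ → State n} {X' : State n} {t : ℝ} (h : HasDerivAt X X' t)
    (k : Fin n) : HasDerivAt (fun s => (X s).1 k) (X'.1 k) t :=
  hasDerivAt_pi.1 (hasFDerivAt_fst.comp_hasDerivAt t h) k

omit [NeZero n] in
lemma hasDerivAt_momentum {X : ℝ → State n} {X' : State n} {t : ℝ} (h : HasDerivAt X X' t)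
    (k : Fin n) : HasDerivAt (fun s => (X s).2 k) (X'.2 k) t :=
  hasDerivAt_pi.1 (hasFDerivAt_snd.comp_hasDerivAt t h) k

lemma hasDerivAt_sum_bond (hΦ : Differentiable ℝ Φ) {q : ℝ → Fin n → ℝ} {q' : Fin n → ℝ} {t : ℝ}
    (hq : ∀ k, HasDerivAt (fun s => q s k) (q' k) t) :
    HasDerivAt (fun s => ∑ k, bond Φ (q s) k)
      (∑ k, bond (deriv Φ) (q t) k * (q' k - q' (k + 1))) t := by
  refine HasDerivAt.fun_sum fun k _ => ?_
  by_cases hk : k = -1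
  · simpa [bond, hk] using hasDerivAt_const t (0 : ℝ)
  · simp only [bond_of_ne hk]
    exact (hΦ _).hasDerivAt.comp t ((hq k).sub (hq (k + 1)))

lemma hasDerivAt_energy (hΦ : Differentiable ℝ Φ) {X : ℝ → State n} {t : ℝ}
    (hX : HasDerivAt X (damped Φ l (X t)) t) :
    HasDerivAt (fun s => energy Φ l (X s)) (-(X t).2 0 ^ 2 - (X t).2 (-1) ^ 2) t := by
  have hq (k : Fin n) : HasDerivAt (fun s => (X s).1 k) ((X t).2 k) t := hasDerivAt_position hX k
  have hkinetic : HasDerivAt (fun s => ∑ k, (X s).2 k ^ 2 / 2)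
      (∑ k, (X t).2 k * (damped Φ l (X t)).2 k) t := by
    refine HasDerivAt.fun_sum fun k _ => ?_
    convert! ((hasDerivAt_momentum hX k).pow 2).div_const 2 using 1
    simp only [Nat.cast_ofNat, Nat.add_one_sub_one, pow_one]
    ring
  have hends : HasDerivAt (fun s => (X s).1 0 ^ 2 / 2 + l * Real.exp ((X s).1 (-1) - (X s).1 0))
      ((X t).1 0 * (X t).2 0 +
        l * Real.exp ((X t).1 (-1) - (X t).1 0) * ((X t).2 (-1) - (X t).2 0)) t := by
    convert! (((hq 0).pow 2).div_const 2).add (((hq (-1)).sub (hq 0)).exp.const_mul l) using 1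
    simp only [Pi.sub_apply, Nat.cast_ofNat, Nat.add_one_sub_one, pow_one]
    ring
  have hwork : ∑ k, (X t).2 k * endForce l (X t) k =
      (X t).2 0 * (l * Real.exp ((X t).1 (-1) - (X t).1 0) - (X t).1 0 - (X t).2 0) +
      (X t).2 (-1) * (-(l * Real.exp ((X t).1 (-1) - (X t).1 0)) - (X t).2 (-1)) := by
    simp [endForce, mul_add, Finset.sum_add_distrib, Pi.single_apply]
  convert! (hkinetic.add (hasDerivAt_sum_bond hΦ hq)).add hends using 1
  have hinternal := sum_mul_sub_add_sum_mul_sub (X t).2 (bond (deriv Φ) (X t).1)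
  simp only [damped, mul_add, Finset.sum_add_distrib, hwork]
  linear_combination -hinternal

lemma antitoneOn_energy (hΦ : Differentiable ℝ Φ) {X : ℝ → State n} {I : Set ℝ} (hI : Convex ℝ I)
    (hX : ∀ t ∈ I, HasDerivAt X (damped Φ l (X t)) t) :
    AntitoneOn (fun t => energy Φ l (X t)) I := by
  have hE := fun t ht => hasDerivAt_energy hΦ (hX t ht)
  refine antitoneOn_of_deriv_nonpos hI (fun t ht => (hE t ht).continuousAt.continuousWithinAt)
    (fun t ht => (hE t (interior_subset ht)).differentiableAt.differentiableWithinAt)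
    fun t ht => ?_
  rw [(hE t (interior_subset ht)).deriv]
  linarith [sq_nonneg ((X t).2 0), sq_nonneg ((X t).2 (-1))]

end ClosedLoop

/-! ### Compactness of the sublevel sets of the energy -/

section Compactness

variable {n : ℕ} [NeZero n] {Φ : ℝ → ℝ} {l : ℝ}

lemma monotone_position_add_val_mul {q : Fin n → ℝ} {y : ℝ}
    (hgap : ∀ k, k ≠ -1 → q k - q (k + 1) ≤ y) : Monotone fun k : Fin n => q k + k.val * y := by
  obtain ⟨m, rfl⟩ := Nat.exists_eq_succ_of_ne_zero (NeZero.ne n)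
  refine Fin.monotone_iff_le_succ.2 fun i => ?_
  have hgap_i := hgap _ (castSucc_ne_neg_one i)
  rw [Fin.coeSucc_eq_succ] at hgap_i
  simp only [Fin.val_castSucc, Fin.val_succ]
  push_cast
  linarith

lemma abs_position_le {q : Fin n → ℝ} {r y z : ℝ} (hy : 0 ≤ y) (hz : 0 ≤ z) (h0 : |q 0| ≤ r)
    (hgap : ∀ k, k ≠ -1 → q k - q (k + 1) ≤ y) (hend : q (-1) - q 0 ≤ z) (k : Fin n) :
    |q k| ≤ r + n * y + z := by
  have hmono := monotone_position_add_val_mul hgap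
  have hlow := hmono (Fin.zero_le k)
  have hhigh := hmono (show k ≤ -1 from Fin.le_def.2 (by rw [val_neg_one]; omega))
  have hval (j : Fin n) : 0 ≤ j.val * y ∧ j.val * y ≤ n * y :=
    ⟨by positivity, by gcongr; exact j.isLt.le⟩
  simp only [Fin.val_zero, Nat.cast_zero, zero_mul] at hlow
  rw [abs_le] at h0 ⊢
  constructor <;> linarith [hval k, hval (-1)]

/-- `n * m` is a lower bound for the potential energy of the chain. -/
lemma summands_le_of_energy_le {m : ℝ} (hm : m ≤ 0) (hΦ : ∀ y, m ≤ Φ y) (hl : 0 ≤ l)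
    {x : State n} {C : ℝ} (hx : energy Φ l x ≤ C) :
    (∀ k, x.2 k ^ 2 / 2 ≤ C - n * m) ∧ (∀ k, bond Φ x.1 k ≤ C - n * m) ∧
      x.1 0 ^ 2 / 2 ≤ C - n * m ∧ l * Real.exp (x.1 (-1) - x.1 0) ≤ C - n * m := by
  have hkin (k : Fin n) : x.2 k ^ 2 / 2 ≤ ∑ k, x.2 k ^ 2 / 2 :=
    Finset.single_le_sum (f := fun k => x.2 k ^ 2 / 2) (fun k _ => by positivity)
      (Finset.mem_univ k)
  have hbond (k : Fin n) : m ≤ bond Φ x.1 k := by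
    unfold bond
    split_ifs
    exacts [hm, hΦ _]
  have hpot (k : Fin n) : bond Φ x.1 k - m ≤ ∑ k, bond Φ x.1 k - n * m := by
    have hle := Finset.single_le_sum (f := fun k => bond Φ x.1 k - m)
      (fun k _ => sub_nonneg.2 (hbond k)) (Finset.mem_univ k)
    simpa [Finset.sum_sub_distrib] using hle
  have hspring : 0 ≤ x.1 0 ^ 2 / 2 := by positivity
  have hexp : 0 ≤ l * Real.exp (x.1 (-1) - x.1 0) := by positivity
  have hkin0 := (by positivity : 0 ≤ x.2 0 ^ 2 / 2).trans (hkin 0)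
  unfold energy at hx
  refine ⟨fun k => ?_, fun k => ?_, ?_, ?_⟩
  · linarith [hkin k, hpot 0, hbond 0]
  · linarith [hpot k]
  · linarith [hpot 0, hbond 0]
  · linarith [hpot 0, hbond 0]

lemma isCompact_energy_le (hΦ : Continuous Φ) (hbdd : BddBelow (range Φ))
    (htop : Tendsto Φ atTop atTop) (hl : 0 < l) (C : ℝ) :
    IsCompact {x : State n | energy Φ l x ≤ C} := by
  obtain ⟨m, hm⟩ := hbdd
  set D := C - n * min m 0
  obtain ⟨y, hy⟩ := (htop.eventually_gt_atTop D).exists_forall_of_atTop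
  set z := |Real.log (D / l)|
  have hE : Continuous (energy Φ l : State n → ℝ) :=
    contDiff_zero.1 (contDiff_energy (contDiff_zero.2 hΦ) l)
  refine Metric.isCompact_of_isClosed_isBounded (isClosed_le hE continuous_const) ?_
  refine isBounded_iff_forall_norm_le.2 ⟨√(2 * D) + n * max y 0 + z, fun x hx => ?_⟩
  obtain ⟨hp, hbond, hq0, hexp⟩ := summands_le_of_energy_le (min_le_right m 0)
    (fun s => (min_le_left m 0).trans (hm (mem_range_self s))) hl.le hx
  have habs {s : ℝ} (hs : s ^ 2 / 2 ≤ D) : |s| ≤ √(2 * D) :=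
    Real.abs_le_sqrt (by linarith)
  have hD : 0 < D := (by positivity : 0 < l * Real.exp _).trans_le hexp
  have hgap (k : Fin n) (hk : k ≠ -1) : x.1 k - x.1 (k + 1) ≤ max y 0 := by
    by_contra! hlt
    have hle := hbond k
    rw [bond_of_ne hk] at hle
    exact (hy _ ((le_max_left y 0).trans hlt.le)).not_ge hle
  have hend : x.1 (-1) - x.1 0 ≤ z :=
    ((Real.le_log_iff_exp_le (by positivity)).2 ((le_div_iff₀' hl).2 hexp)).trans (le_abs_self _)
  have hz : 0 ≤ n * max y 0 + z := by positivity
  rw [Prod.norm_def]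
  refine max_le ((pi_norm_le_iff_of_nonneg (by positivity)).2 fun k => ?_)
    ((pi_norm_le_iff_of_nonneg (by positivity)).2 fun k => ?_)
  · exact abs_position_le (le_max_right y 0) (abs_nonneg _) (habs hq0) hgap hend k
  · exact (habs (hp k)).trans (by linarith)

end Compactness

/-! ### Potentials with countably many critical forces -/

section Potential

/-- A smooth potential, bounded below and growing to the right, whose force has only countably many
critical points. The admissible potentials are the analytic examples. -/
structure ConfiningPotential (Φ : ℝ → ℝ) : Prop where
  contDiff : ContDiff ℝ ∞ Φ
  bddBelow : BddBelow (range Φ)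
  tendsto_atTop : Tendsto Φ atTop atTop
  countable_critical : {y | deriv (deriv Φ) y = 0}.Countable

lemma ConfiningPotential.contDiff_deriv {Φ : ℝ → ℝ} (h : ConfiningPotential Φ) :
    ContDiff ℝ ∞ (deriv Φ) :=
  (contDiff_infty_iff_deriv.1 h.contDiff).2

lemma countable_zeros_of_analyticAt {f : ℝ → ℝ} (hf : ∀ x, AnalyticAt ℝ f x) {x₀ : ℝ}
    (hx₀ : f x₀ ≠ 0) : {x | f x = 0}.Countable := by
  have hmem : {x | f x = 0}ᶜ ∈ codiscrete ℝ :=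
    AnalyticOnNhd.preimage_zero_mem_codiscrete (fun x _ => hf x) hx₀
  have hdiscrete : IsDiscrete {x | f x = 0} := by
    simpa using isDiscrete_of_codiscreteWithin hmem
  exact (HereditarilyLindelofSpace.isLindelof _).countable_of_isDiscrete hdiscrete

lemma exists_deriv_deriv_ne_zero {Φ : ℝ → ℝ} (hΦ : Differentiable ℝ Φ)
    (hφ : Differentiable ℝ (deriv Φ)) (hbdd : BddBelow (range Φ)) (htop : Tendsto Φ atTop atTop) :
    ∃ y, deriv (deriv Φ) y ≠ 0 := by
  by_contra! hzero
  have heven (y : ℝ) : HasDerivAt (fun y => Φ y + Φ (-y)) 0 y := by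
    convert! (hΦ y).hasDerivAt.add ((hΦ (-y)).hasDerivAt.comp y (hasDerivAt_neg y)) using 1
    rw [is_const_of_deriv_eq_zero hφ hzero y (-y), mul_neg_one, add_neg_cancel]
  obtain ⟨m, hm⟩ := hbdd
  obtain ⟨y, hy⟩ := (htop.eventually_gt_atTop (2 * Φ 0 - m)).exists
  have hsum := is_const_of_deriv_eq_zero (fun y => (heven y).differentiableAt)
    (fun y => (heven y).deriv) y 0
  rw [neg_zero] at hsum
  linarith [hm (mem_range_self (-y))]

lemma Admissible.confiningPotential {Φ : ℝ → ℝ} (h : Admissible Φ) : ConfiningPotential Φ := by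
  obtain ⟨hana, hbdd, htop⟩ := h
  obtain ⟨y, hy⟩ := exists_deriv_deriv_ne_zero (fun x => (hana x).differentiableAt)
    (fun x => (hana x).deriv.differentiableAt) hbdd htop
  exact ⟨contDiff_iff_contDiffAt.2 fun x => (hana x).contDiffAt, hbdd, htop,
    countable_zeros_of_analyticAt (fun x => (hana x).deriv.deriv) hy⟩

lemma countable_level_of_countable_critical {φ : ℝ → ℝ} (hφ : Differentiable ℝ φ)
    (hcrit : {y | deriv φ y = 0}.Countable) (c : ℝ) : {y | φ y = c}.Countable := by
  have hdiscrete : IsDiscrete ({y | φ y = c} \ {y | deriv φ y = 0}) := by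
    refine isDiscrete_iff_nhdsNE.2 fun y hy => ?_
    rw [inf_principal_eq_bot]
    filter_upwards [(hφ y).hasDerivAt.eventually_ne hy.2] with z hz hz'
    exact hz hz'.1
  exact (((HereditarilyLindelofSpace.isLindelof _).countable_of_isDiscrete hdiscrete).union
    hcrit).mono (by simp)

lemma eq_of_comp_eq_const {φ : ℝ → ℝ} {c : ℝ} (hc : {y | φ y = c}.Countable) {α : Type*}
    [TopologicalSpace α] {I : Set α} (hI : IsPreconnected I) {f : α → ℝ} (hf : ContinuousOn f I)
    (hφf : ∀ t ∈ I, φ (f t) = c) {s t : α} (hs : s ∈ I) (ht : t ∈ I) : f s = f t :=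
  hc.isTotallyDisconnected (f '' I) (image_subset_iff.2 hφf) (hI.image f hf)
    (mem_image_of_mem f hs) (mem_image_of_mem f ht)

lemma sum_bond_id {n : ℕ} [NeZero n] (q : Fin n → ℝ) : ∑ k, bond id q k = q 0 - q (-1) := by
  have hbond (k : Fin n) :
      bond id q k = q k - q (k + 1) - if k = -1 then q (-1) - q 0 else 0 := by
    unfold bond
    split_ifs with hk <;> simp [hk]
  simp only [hbond, Finset.sum_sub_distrib, sum_add_one, sub_self, zero_sub, Finset.sum_ite_eq',
    Finset.mem_univ, if_true, neg_sub]

/-- If all the forces `φ (q k - q (k + 1))` equal `l * exp (q (-1) - q 0)` and one gap is critical,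
then `l` is determined by that gap and by the sum of the gaps, which leaves countably many
values. -/
lemma exists_pos_forall_deriv_ne_zero {n : ℕ} [NeZero n] {φ : ℝ → ℝ} (hφ : Differentiable ℝ φ)
    (hcrit : {y | deriv φ y = 0}.Countable) :
    ∃ l > 0, ∀ q : Fin n → ℝ,
      (∀ k, k ≠ -1 → φ (q k - q (k + 1)) = l * Real.exp (q (-1) - q 0)) →
      ∀ k, k ≠ -1 → deriv φ (q k - q (k + 1)) ≠ 0 := by
  let exceptional : Set ℝ := ⋃ z ∈ {z | deriv φ z = 0},
    (fun y : Fin n → ℝ => φ z * Real.exp (∑ k, y k)) '' univ.pi fun _ => insert 0 {y | φ y = φ z}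
  have hcount : exceptional.Countable := hcrit.biUnion fun z _ => Countable.image
    (countable_univ_pi fun _ => (countable_level_of_countable_critical hφ hcrit _).insert 0) _
  obtain ⟨l, hl, hl0⟩ := (hcount.dense_compl ℝ).exists_mem_open (isOpen_Ioi (a := (0 : ℝ)))
    ⟨1, mem_Ioi.2 one_pos⟩
  refine ⟨l, hl0, fun q hq k hk hzero => hl ?_⟩
  refine mem_biUnion (x := q k - q (k + 1)) hzero ⟨bond id q, fun j _ => ?_, ?_⟩
  · by_cases hj : j = -1
    · exact .inl (if_pos hj)
    · refine .inr ?_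
      simp [bond_of_ne hj, hq j hj, hq k hk]
  · simp only [sum_bond_id, hq k hk]
    rw [mul_assoc, ← Real.exp_add]
    simp

end Potential

/-! ### Convergence to an equilibrium -/

section Equilibrium

variable {n : ℕ} [NeZero n] {Φ : ℝ → ℝ} {l : ℝ}

lemma deriv_gap_eq_of_damped_eq_zero (hn : 2 ≤ n) {x : State n} (hx : damped Φ l x = 0)
    {k : Fin n} (hk : k ≠ -1) :
    deriv Φ (x.1 k - x.1 (k + 1)) = l * Real.exp (x.1 (-1) - x.1 0) := by
  have hp : x.2 = 0 := congrArg Prod.fst hx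
  have hforce (k : Fin n) :
      bond (deriv Φ) x.1 (k - 1) - bond (deriv Φ) x.1 k + endForce l x k = 0 :=
    congrFun (congrArg Prod.snd hx) k
  have hbond : ∀ k, k ≠ -1 → bond (deriv Φ) x.1 k = bond (deriv Φ) x.1 0 := by
    refine fin_chain_induction (fun _ => rfl) fun k hk ih hk' => ?_
    have hforce_k := hforce (k + 1)
    rw [endForce_of_ne (add_one_ne_zero_of_ne_neg_one hk) hk', add_sub_cancel_right, ih hk]
      at hforce_k
    linarith
  have hlast := hforce (-1)
  rw [endForce_neg_one hn, bond_neg_one,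
    hbond _ (sub_one_ne_neg_one_of_ne_zero (zero_ne_neg_one hn).symm), hp] at hlast
  rw [← bond_of_ne (φ := deriv Φ) hk, hbond k hk]
  simp only [Pi.zero_apply] at hlast
  linarith

lemma eq_zero_of_hasDerivAt_of_eqOn_const {F : Type*} [NormedAddCommGroup F] [NormedSpace ℝ F]
    {I : Set ℝ} (hI : IsOpen I) {f f' : ℝ → F} {c : F} (hf : ∀ t ∈ I, HasDerivAt f (f' t) t)
    (hc : ∀ t ∈ I, f t = c) : ∀ t ∈ I, f' t = 0 := fun t ht =>
  (hf t ht).unique ((hasDerivAt_const t c).congr_of_eventuallyEq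
    (eventually_of_mem (hI.mem_nhds ht) hc))

section Arc

variable {X : ℝ → State n} {I : Set ℝ}

lemma exists_position_eq_of_momentum_eq_zero (hI : IsOpen I) (hI' : IsPreconnected I)
    (hX : ∀ t ∈ I, HasDerivAt X (damped Φ l (X t)) t) {k : Fin n}
    (hk : ∀ t ∈ I, (X t).2 k = 0) : ∃ c, ∀ t ∈ I, (X t).1 k = c := by
  have hq := fun t ht => hasDerivAt_position (hX t ht) k
  exact hI.exists_is_const_of_deriv_eq_zero hI'
    (fun t ht => (hq t ht).differentiableAt.differentiableWithinAt)
    fun t ht => (hq t ht).deriv.trans (hk t ht)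

lemma bond_eq_of_momentum_eq_zero (hI : IsOpen I)
    (hX : ∀ t ∈ I, HasDerivAt X (damped Φ l (X t)) t) {k : Fin n} (hk : ∀ t ∈ I, (X t).2 k = 0) :
    ∀ t ∈ I, bond (deriv Φ) (X t).1 k =
      bond (deriv Φ) (X t).1 (k - 1) + endForce l (X t) k := fun t ht => by
  have hforce :
      bond (deriv Φ) (X t).1 (k - 1) - bond (deriv Φ) (X t).1 k + endForce l (X t) k = 0 :=
    eq_zero_of_hasDerivAt_of_eqOn_const hI (fun t ht => hasDerivAt_momentum (hX t ht) k) hk t ht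
  linarith

/-- The force in a bond whose left particle stands still is constant, hence so is the gap, because
the level sets of the force are countable; so the right particle stands still as well. -/
lemma momentum_add_one_eq_zero (hlevel : ∀ c, {y | deriv Φ y = c}.Countable) (hI : IsOpen I)
    (hI' : IsPreconnected I) (hX : ∀ t ∈ I, HasDerivAt X (damped Φ l (X t)) t) {k : Fin n}
    (hk : k ≠ -1) (hp : ∀ t ∈ I, (X t).2 k = 0) {c : ℝ}
    (hbond : ∀ t ∈ I, bond (deriv Φ) (X t).1 k = c) : ∀ t ∈ I, (X t).2 (k + 1) = 0 := by
  have hq := fun k t ht => hasDerivAt_position (hX t ht) k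
  obtain ⟨d, hd⟩ := exists_position_eq_of_momentum_eq_zero hI hI' hX hp
  intro t ht
  have hgap : ∀ s ∈ I, (X s).1 k - (X s).1 (k + 1) = (X t).1 k - (X t).1 (k + 1) := fun s hs =>
    eq_of_comp_eq_const (hlevel c) hI' (f := fun s => (X s).1 k - (X s).1 (k + 1))
      (fun s hs => ((hq k s hs).sub (hq (k + 1) s hs)).continuousAt.continuousWithinAt)
      (fun s hs => by rw [← hbond s hs, bond_of_ne hk]) hs ht
  exact eq_zero_of_hasDerivAt_of_eqOn_const hI (hq (k + 1)) (c := (X t).1 (k + 1))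
    (fun s hs => by linarith [hgap s hs, hd s hs, hd t ht]) t ht

lemma momentum_eq_zero_of_ends_at_rest (hn : 2 ≤ n) (hlevel : ∀ c, {y | deriv Φ y = c}.Countable)
    (hI : IsOpen I) (hI' : IsPreconnected I) (hX : ∀ t ∈ I, HasDerivAt X (damped Φ l (X t)) t)
    (hfirst : ∀ t ∈ I, (X t).2 0 = 0) (hlast : ∀ t ∈ I, (X t).2 (-1) = 0) (k : Fin n) :
    ∀ t ∈ I, (X t).2 k = 0 := by
  suffices hchain : ∀ k, (∀ t ∈ I, (X t).2 k = 0) ∧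
      (k ≠ -1 → ∃ c, ∀ t ∈ I, bond (deriv Φ) (X t).1 k = c) from (hchain k).1
  refine fin_chain_induction ⟨hfirst, fun _ => ?_⟩ fun k hk ⟨hp, hbond⟩ => ?_
  · obtain ⟨c, hc⟩ := exists_position_eq_of_momentum_eq_zero hI hI' hX hfirst
    obtain ⟨d, hd⟩ := exists_position_eq_of_momentum_eq_zero hI hI' hX hlast
    refine ⟨l * Real.exp (d - c) - c, fun t ht => ?_⟩
    rw [bond_eq_of_momentum_eq_zero hI hX hfirst t ht, zero_sub, bond_neg_one, endForce_zero hn,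
      hc t ht, hd t ht, hfirst t ht]
    ring
  · obtain ⟨c, hc⟩ := hbond hk
    have hp' := momentum_add_one_eq_zero hlevel hI hI' hX hk hp hc
    refine ⟨hp', fun hk' => ⟨c, fun t ht => ?_⟩⟩
    rw [bond_eq_of_momentum_eq_zero hI hX hp' t ht, add_sub_cancel_right, hc t ht,
      endForce_of_ne (add_one_ne_zero_of_ne_neg_one hk) hk', add_zero]

lemma damped_eq_zero_of_energy_eq (hn : 2 ≤ n) (hΦ : Differentiable ℝ Φ)
    (hlevel : ∀ c, {y | deriv Φ y = c}.Countable) (hI : IsOpen I) (hI' : IsPreconnected I)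
    (hX : ∀ t ∈ I, HasDerivAt X (damped Φ l (X t)) t) {c : ℝ}
    (hc : ∀ t ∈ I, energy Φ l (X t) = c) : ∀ t ∈ I, damped Φ l (X t) = 0 := by
  have hdissipation := eq_zero_of_hasDerivAt_of_eqOn_const hI
    (fun t ht => hasDerivAt_energy hΦ (hX t ht)) hc
  have hfirst : ∀ t ∈ I, (X t).2 0 = 0 := fun t ht => by
    nlinarith [hdissipation t ht, sq_nonneg ((X t).2 (-1))]
  have hlast : ∀ t ∈ I, (X t).2 (-1) = 0 := fun t ht => by
    nlinarith [hdissipation t ht, sq_nonneg ((X t).2 0)]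
  have hp := momentum_eq_zero_of_ends_at_rest hn hlevel hI hI' hX hfirst hlast
  exact fun t ht => Prod.ext (funext fun k => hp k t ht) <| funext fun k =>
    eq_zero_of_hasDerivAt_of_eqOn_const hI (fun t ht => hasDerivAt_momentum (hX t ht) k) (hp k) t ht

end Arc

/-- LaSalle's principle in a static form: the closed-loop trajectory issuing from a point of least
energy in the closure of the reachable set stays in that closure, so it cannot dissipate. -/
lemma exists_mem_closure_reach_damped_eq_zero (hn : 2 ≤ n) (hΦ : ConfiningPotential Φ)
    (hl : 0 < l) (x : State n) : ∃ y ∈ closure {y | Reach Φ x y}, damped Φ l y = 0 := by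
  have hd : Differentiable ℝ Φ := hΦ.contDiff.differentiable (by simp)
  have hφ : ContDiff ℝ 1 (deriv Φ) := hΦ.contDiff_deriv.of_le (by simp)
  have hcompact := (isCompact_energy_le hd.continuous hΦ.bddBelow hΦ.tendsto_atTop hl
    (energy Φ l x)).inter_left isClosed_closure (s := closure {y | Reach Φ x y})
  obtain ⟨y, ⟨hyR, hyE⟩, hmin⟩ := hcompact.exists_isMinOn
    ⟨x, subset_closure .refl, (le_refl (energy Φ l x) :)⟩
    (contDiff_energy hΦ.contDiff l).continuous.continuousOn
  obtain ⟨X, hX0, ε, hε, hX⟩ := (contDiff_damped hφ l).contDiffAt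
    |>.exists_forall_mem_closedBall_exists_eq_forall_mem_Ioo_hasDerivAt₀ (x₀ := y) 0
  simp only [zero_sub, zero_add] at hX
  have hreach : ∀ t ∈ Ioo 0 ε, X t ∈ closure {y | Reach Φ x y} := fun t ht => by
    have hstep : Step Φ (X 0) (X t) := step_of_hasDerivWithinAt_damped hφ ht.1 fun s hs =>
      (hX s ⟨by linarith [hs.1], hs.2.trans_lt ht.2⟩).hasDerivWithinAt
    exact hstep.mem_closure_reach hφ (hX0 ▸ hyR)
  have hconst : ∀ t ∈ Ioo 0 ε, energy Φ l (X t) = energy Φ l y := fun t ht => by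
    have hle : energy Φ l (X t) ≤ energy Φ l (X 0) :=
      antitoneOn_energy hd (convex_Ioo _ _) hX ⟨by linarith, hε⟩ ⟨by linarith [ht.1], ht.2⟩ ht.1.le
    rw [hX0] at hle
    exact hle.antisymm (hmin ⟨hreach t ht, hle.trans hyE⟩)
  have hmid : ε / 2 ∈ Ioo 0 ε := ⟨half_pos hε, half_lt_self hε⟩
  exact ⟨X (ε / 2), hreach _ hmid, damped_eq_zero_of_energy_eq hn hd
    (countable_level_of_countable_critical (hφ.differentiable one_ne_zero) hΦ.countable_critical)
    isOpen_Ioo isPreconnected_Ioo (fun t ht => hX t ⟨by linarith [ht.1], ht.2⟩) hconst _ hmid⟩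

/-- A rest point of the closed loop at which the force of every bond is a local diffeomorphism of
the gap. -/
structure RegularEq (Φ : ℝ → ℝ) (l : ℝ) (x : State n) : Prop where
  damped_eq_zero : damped Φ l x = 0
  deriv_ne_zero : ∀ k, k ≠ -1 → deriv (deriv Φ) (x.1 k - x.1 (k + 1)) ≠ 0

lemma RegularEq.eq_rest {x : State n} (h : RegularEq Φ l x) : x = (x.1, 0) :=
  Prod.ext rfl (congrArg Prod.fst h.damped_eq_zero)

lemma exists_forall_exists_mem_closure_reach_regularEq (hn : 2 ≤ n) (hΦ : ConfiningPotential Φ) :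
    ∃ l, ∀ x : State n, ∃ y ∈ closure {y | Reach Φ x y}, RegularEq Φ l y := by
  obtain ⟨l, hl, hreg⟩ := exists_pos_forall_deriv_ne_zero (n := n)
    (hΦ.contDiff_deriv.differentiable (by simp)) hΦ.countable_critical
  refine ⟨l, fun x => ?_⟩
  obtain ⟨y, hy, hrest⟩ := exists_mem_closure_reach_damped_eq_zero hn hΦ hl x
  exact ⟨y, hy, hrest, hreg y.1 fun k hk => deriv_gap_eq_of_damped_eq_zero hn hrest hk⟩

end Equilibrium

/-! ### Solving the chain of equations of motion -/

section Recursion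

variable {n : ℕ} [NeZero n]

lemma fin_two_step_induction {P : Fin n → Prop} (zero : P 0) (one : P 1)
    (add_one : ∀ k, k ≠ 0 → k ≠ -1 → P (k - 1) → P k → P (k + 1)) (k : Fin n) : P k := by
  suffices hpair : ∀ k, P k ∧ (k ≠ -1 → P (k + 1)) from (hpair k).1
  refine fin_chain_induction ⟨zero, fun _ => ?_⟩ fun k hk ⟨hPk, hPk'⟩ => ⟨hPk' hk, fun hk' => ?_⟩
  · rwa [zero_add]
  · exact add_one _ (add_one_ne_zero_of_ne_neg_one hk) hk'
      ((add_sub_cancel_right k 1).symm ▸ hPk) (hPk' hk)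

lemma exists_fin_two_step_recursion {α : Type*} (hn : 2 ≤ n) (a b : α) (g : Fin n → α → α → α) :
    ∃ R : Fin n → α, R 0 = a ∧ R 1 = b ∧
      ∀ k, k ≠ 0 → k ≠ -1 → R (k + 1) = g k (R (k - 1)) (R k) := by
  let r (m : ℕ) : α × α :=
    m.rec (a, b) fun j p => (p.2, g (Fin.ofNat n (j + 1)) p.1 p.2)
  refine ⟨fun k => (r k.val).1, rfl, ?_, fun k hk hk' => ?_⟩
  · simp only [Fin.val_one', Nat.mod_eq_of_lt hn]
    rfl
  · obtain ⟨j, hj⟩ := Nat.exists_eq_succ_of_ne_zero (Fin.val_ne_zero_iff.2 hk)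
    have hpred : (k - 1).val = j := by
      have hval := val_add_one_of_ne_neg_one (sub_one_ne_neg_one_of_ne_zero hk)
      rw [sub_add_cancel] at hval
      omega
    have hk_eq : Fin.ofNat n (j + 1) = k := Fin.ext <| by
      rw [← Nat.succ_eq_add_one, ← hj, Fin.val_ofNat, Nat.mod_eq_of_lt k.2]
    simp only [val_add_one_of_ne_neg_one hk', hpred, hj, r, hk_eq]

end Recursion

section DerivAlong

variable {M : Type*} [NormedAddCommGroup M] [NormedSpace ℝ M] {F : M → M} {G H : M → ℝ}

/-- The derivative of the function `G` along the vector field `F`. -/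
def derivAlong (F : M → M) (G : M → ℝ) (e : M) : ℝ := fderiv ℝ G e (F e)

lemma contDiffAt_derivAlong {m k : WithTop ℕ∞} (hF : ContDiff ℝ m F) {e : M}
    (hG : ContDiffAt ℝ k G e) (hk : m + 1 ≤ k) : ContDiffAt ℝ m (derivAlong F G) e :=
  (hG.fderiv_right hk).clm_apply hF.contDiffAt

lemma derivAlong_eventuallyEq {e : M} (h : G =ᶠ[𝓝 e] H) :
    derivAlong F G =ᶠ[𝓝 e] derivAlong F H :=
  (h.fderiv (𝕜 := ℝ)).mono fun x hx => by simp only [derivAlong, hx]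

lemma derivAlong_const (c : ℝ) : derivAlong F (fun _ => c) = fun _ => 0 := by
  funext
  simp [derivAlong]

lemma derivAlong_clm (A : M →L[ℝ] ℝ) : derivAlong F A = fun e => A (F e) := by
  funext
  simp [derivAlong]

lemma hasDerivWithinAt_comp_derivAlong {γ : ℝ → M} {s : Set ℝ} {t : ℝ}
    (hG : DifferentiableAt ℝ G (γ t)) (hγ : HasDerivWithinAt γ (F (γ t)) s t) :
    HasDerivWithinAt (fun t => G (γ t)) (derivAlong F G (γ t)) s t :=
  hG.hasFDerivAt.comp_hasDerivWithinAt t hγ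

/-- `G` is smooth near the curve `σ` and takes the constant value `c` on it. -/
structure SmoothAlong (σ : ℝ → M) (G : M → ℝ) (c : ℝ) : Prop where
  contDiffAt : ∀ t, ContDiffAt ℝ ∞ G (σ t)
  eq_const : ∀ t, G (σ t) = c

namespace SmoothAlong

variable {σ : ℝ → M} {c d : ℝ}

lemma sub (hG : SmoothAlong σ G c) (hH : SmoothAlong σ H d) :
    SmoothAlong σ (fun e => G e - H e) (c - d) :=
  ⟨fun t => (hG.contDiffAt t).sub (hH.contDiffAt t), fun t => by rw [hG.eq_const, hH.eq_const]⟩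

lemma comp {g : ℝ → ℝ} (hg : ContDiffAt ℝ ∞ g c) (hG : SmoothAlong σ G c) :
    SmoothAlong σ (fun e => g (G e)) (g c) :=
  ⟨fun t => ContDiffAt.comp (σ t) ((hG.eq_const t).symm ▸ hg) (hG.contDiffAt t),
    fun t => by rw [hG.eq_const]⟩

lemma derivAlong (hF : ContDiff ℝ ∞ F) (hσ : ∀ t, HasDerivAt σ (F (σ t)) t)
    (hG : SmoothAlong σ G c) : SmoothAlong σ (derivAlong F G) 0 := by
  refine ⟨fun t => contDiffAt_derivAlong hF (hG.contDiffAt t) (by simp), fun t => ?_⟩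
  have hd := hasDerivWithinAt_comp_derivAlong ((hG.contDiffAt t).differentiableAt (by simp))
    (hσ t).hasDerivWithinAt (s := univ)
  simp only [hG.eq_const, hasDerivWithinAt_univ] at hd
  exact hd.unique (hasDerivAt_const t c)

lemma tendsto (hG : SmoothAlong σ G c) (t : ℝ) : Tendsto G (𝓝 (σ t)) (𝓝 c) :=
  hG.eq_const t ▸ (hG.contDiffAt t).continuousAt

end SmoothAlong

/-- `ψ` is a smooth two-sided inverse of `φ` near `y`. -/
structure IsLocalInverse (φ ψ : ℝ → ℝ) (y : ℝ) : Prop where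
  contDiffAt : ContDiffAt ℝ ∞ ψ (φ y)
  left_inverse : ∀ᶠ u in 𝓝 y, ψ (φ u) = u
  right_inverse : ∀ᶠ v in 𝓝 (φ y), φ (ψ v) = v

lemma exists_isLocalInverse {φ : ℝ → ℝ} {y : ℝ} (hφ : ContDiffAt ℝ ∞ φ y) (hy : deriv φ y ≠ 0) :
    ∃ ψ, IsLocalInverse φ ψ y := by
  have hd := (hφ.hasStrictDerivAt (by simp)).hasStrictFDerivAt_equiv hy
  exact ⟨_, hφ.to_localInverse hd.hasFDerivAt (by simp), hd.eventually_left_inverse,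
    hd.eventually_right_inverse⟩

/-- The equation of motion `H'' = φ (G - H) - φ (H - K)` of a particle at `H` with neighbours at
`G` and `K`, solved for `K` by means of a local inverse `ψ` of `φ`. -/
def nextPosition (F : M → M) (φ ψ : ℝ → ℝ) (G H : M → ℝ) (e : M) : ℝ :=
  H e - ψ (φ (G e - H e) - derivAlong F (derivAlong F H) e)

section NextPosition

variable {φ ψ : ℝ → ℝ} {σ : ℝ → M} {a b c : ℝ}

lemma smoothAlong_force (hF : ContDiff ℝ ∞ F) (hσ : ∀ t, HasDerivAt σ (F (σ t)) t)
    (hφ : ContDiff ℝ ∞ φ) (hG : SmoothAlong σ G a) (hH : SmoothAlong σ H b) :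
    SmoothAlong σ (fun e => φ (G e - H e) - derivAlong F (derivAlong F H) e) (φ (a - b)) := by
  simpa using ((hG.sub hH).comp hφ.contDiffAt).sub ((hH.derivAlong hF hσ).derivAlong hF hσ)

lemma smoothAlong_nextPosition (hF : ContDiff ℝ ∞ F) (hσ : ∀ t, HasDerivAt σ (F (σ t)) t)
    (hφ : ContDiff ℝ ∞ φ) (hψ : IsLocalInverse φ ψ (b - c)) (hforce : φ (a - b) = φ (b - c))
    (hG : SmoothAlong σ G a) (hH : SmoothAlong σ H b) :
    SmoothAlong σ (nextPosition F φ ψ G H) c := by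
  have hgap := (smoothAlong_force hF hσ hφ hG hH).comp (hforce ▸ hψ.contDiffAt)
  rw [hforce, hψ.left_inverse.self_of_nhds] at hgap
  exact sub_sub_cancel b c ▸ hH.sub hgap

lemma eventually_derivAlong_derivAlong_eq (hF : ContDiff ℝ ∞ F)
    (hσ : ∀ t, HasDerivAt σ (F (σ t)) t) (hφ : ContDiff ℝ ∞ φ) (hψ : IsLocalInverse φ ψ (b - c))
    (hforce : φ (a - b) = φ (b - c)) (hG : SmoothAlong σ G a) (hH : SmoothAlong σ H b) (t : ℝ) :
    ∀ᶠ e in 𝓝 (σ t), derivAlong F (derivAlong F H) e =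
      φ (G e - H e) - φ (H e - nextPosition F φ ψ G H e) := by
  have htendsto := hforce ▸ (smoothAlong_force hF hσ hφ hG hH).tendsto t
  filter_upwards [htendsto.eventually hψ.right_inverse] with e he
  rw [nextPosition, sub_sub_cancel, he, sub_sub_cancel]

lemma nextPosition_eventuallyEq {G' H' K' : M → ℝ} {e₀ : M}
    (hψ : ∀ᶠ u in 𝓝 (H' e₀ - K' e₀), ψ (φ u) = u) (hH' : ContinuousAt H' e₀)
    (hK' : ContinuousAt K' e₀)
    (hode : ∀ᶠ e in 𝓝 e₀, derivAlong F (derivAlong F H') e = φ (G' e - H' e) - φ (H' e - K' e))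
    (hG : G =ᶠ[𝓝 e₀] G') (hH : H =ᶠ[𝓝 e₀] H') : nextPosition F φ ψ G H =ᶠ[𝓝 e₀] K' := by
  filter_upwards [hG, hH, derivAlong_eventuallyEq (F := F) (derivAlong_eventuallyEq (F := F) hH),
    hode, (hH'.sub hK').eventually hψ] with e hGe hHe hHe'' he hψe
  rw [nextPosition, hGe, hHe, hHe'', he, sub_sub_cancel]
  linarith [show ψ (φ (H' e - K' e)) = H' e - K' e from hψe]

end NextPosition

end DerivAlong

/-! ### Local controllability at a regular equilibrium -/

section Chain

variable {n : ℕ}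

/-- Equal to `1` for `t ≤ 1/3` and to `0` for `t ≥ 2/3`. -/
def cutoff (t : ℝ) : ℝ := Real.smoothTransition (2 - 3 * t)

lemma contDiff_cutoff : ContDiff ℝ ∞ cutoff :=
  Real.smoothTransition.contDiff.comp (by fun_prop)

lemma cutoff_eventually_eq_one : ∀ᶠ t in 𝓝 (0 : ℝ), cutoff t = 1 := by
  filter_upwards [eventually_lt_nhds (show (0 : ℝ) < 1 / 3 by norm_num)] with t ht
  exact Real.smoothTransition.one_of_one_le (by linarith)

lemma cutoff_eventually_eq_zero : ∀ᶠ t in 𝓝 (1 : ℝ), cutoff t = 0 := by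
  filter_upwards [eventually_gt_nhds (show (2 / 3 : ℝ) < 1 by norm_num)] with t ht
  exact Real.smoothTransition.zero_of_nonpos (by linarith)

/-- The position of particle `k`, switched off smoothly to its value at `xs`. -/
def switchedPosition (xs : State n) (k : Fin n) (e : State n × ℝ) : ℝ :=
  xs.1 k + cutoff e.2 * (e.1.1 k - xs.1 k)

lemma smoothAlong_switchedPosition (xs : State n) (k : Fin n) :
    SmoothAlong (fun t => (xs, t)) (switchedPosition xs k) (xs.1 k) := by
  have hcutoff : ContDiff ℝ ∞ fun e : State n × ℝ => cutoff e.2 :=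
    contDiff_cutoff.comp contDiff_snd
  exact ⟨fun t => (contDiff_const.add (hcutoff.mul (by fun_prop))).contDiffAt,
    fun t => by simp [switchedPosition]⟩

lemma switchedPosition_eventuallyEq_zero (xs : State n) (k : Fin n) :
    switchedPosition xs k =ᶠ[𝓝 (xs, 0)] fun e => e.1.1 k := by
  filter_upwards [(continuous_snd.tendsto (xs, (0 : ℝ))).eventually cutoff_eventually_eq_one]
    with e he
  simp [switchedPosition, he]

lemma switchedPosition_eventuallyEq_one (xs : State n) (k : Fin n) :
    switchedPosition xs k =ᶠ[𝓝 (xs, 1)] fun _ => xs.1 k := by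
  filter_upwards [(continuous_snd.tendsto (xs, (1 : ℝ))).eventually cutoff_eventually_eq_zero]
    with e he
  simp [switchedPosition, he]

variable [NeZero n] {Φ : ℝ → ℝ} {l : ℝ} {xs : State n}

/-- The closed-loop vector field on space-time. -/
def dampedClock (Φ : ℝ → ℝ) (l : ℝ) (e : State n × ℝ) : State n × ℝ := (damped Φ l e.1, 1)

lemma contDiff_dampedClock {m : WithTop ℕ∞} (hφ : ContDiff ℝ m (deriv Φ)) :
    ContDiff ℝ m (dampedClock Φ l : State n × ℝ → _) :=
  ((contDiff_damped hφ l).comp contDiff_fst).prodMk contDiff_const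

lemma derivAlong_position (k : Fin n) :
    derivAlong (dampedClock Φ l) (fun e : State n × ℝ => e.1.1 k) = fun e => e.1.2 k :=
  derivAlong_clm ((ContinuousLinearMap.proj (R := ℝ) (φ := fun _ : Fin n => ℝ) k).comp
    ((ContinuousLinearMap.fst ℝ _ _).comp (ContinuousLinearMap.fst ℝ (State n) ℝ)))

lemma derivAlong_momentum (k : Fin n) :
    derivAlong (dampedClock Φ l) (fun e : State n × ℝ => e.1.2 k) =
      fun e => (damped Φ l e.1).2 k :=
  derivAlong_clm ((ContinuousLinearMap.proj (R := ℝ) (φ := fun _ : Fin n => ℝ) k).comp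
    ((ContinuousLinearMap.snd ℝ _ _).comp (ContinuousLinearMap.fst ℝ (State n) ℝ)))

lemma damped_snd_of_ne {k : Fin n} (hk : k ≠ 0) (hk' : k ≠ -1) (x : State n) :
    (damped Φ l x).2 k = deriv Φ (x.1 (k - 1) - x.1 k) - deriv Φ (x.1 k - x.1 (k + 1)) := by
  simp only [damped, bond_of_ne (sub_one_ne_neg_one_of_ne_zero hk), bond_of_ne hk',
    endForce_of_ne hk hk', sub_add_cancel, add_zero]

/-- Positions as functions on space-time which solve the equations of motion of the interior
particles along the closed loop, agree with the actual positions around time `0` and are at rest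
in `xs` around time `1`. -/
structure SteeringChain (Φ : ℝ → ℝ) (l : ℝ) (xs : State n) (R : Fin n → State n × ℝ → ℝ) :
    Prop where
  smoothAlong : ∀ k, SmoothAlong (fun t => (xs, t)) (R k) (xs.1 k)
  ode : ∀ k, k ≠ 0 → k ≠ -1 → ∀ t, ∀ᶠ e in 𝓝 (xs, t),
    derivAlong (dampedClock Φ l) (derivAlong (dampedClock Φ l) (R k)) e =
      deriv Φ (R (k - 1) e - R k e) - deriv Φ (R k e - R (k + 1) e)
  eq_position : ∀ k, R k =ᶠ[𝓝 (xs, 0)] fun e => e.1.1 k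
  eq_rest : ∀ k, R k =ᶠ[𝓝 (xs, 1)] fun _ => xs.1 k

lemma RegularEq.force_eq (hn : 2 ≤ n) (hx : RegularEq Φ l xs) {k : Fin n} (hk : k ≠ 0)
    (hk' : k ≠ -1) : deriv Φ (xs.1 (k - 1) - xs.1 k) = deriv Φ (xs.1 k - xs.1 (k + 1)) := by
  have hpred :=
    deriv_gap_eq_of_damped_eq_zero hn hx.damped_eq_zero (sub_one_ne_neg_one_of_ne_zero hk)
  rw [sub_add_cancel] at hpred
  rw [hpred, deriv_gap_eq_of_damped_eq_zero hn hx.damped_eq_zero hk']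

/-- The positions of the first two particles are prescribed; the equations of motion of the
interior particles then determine all the others. -/
lemma RegularEq.exists_steeringChain (hn : 2 ≤ n) (hφ : ContDiff ℝ ∞ (deriv Φ))
    (hx : RegularEq Φ l xs) : ∃ R, SteeringChain Φ l xs R := by
  choose! ψ hψ using fun k hk => exists_isLocalInverse hφ.contDiffAt (hx.deriv_ne_zero k hk)
  obtain ⟨R, hR0, hR1, hR⟩ := exists_fin_two_step_recursion hn (switchedPosition xs 0)
    (switchedPosition xs 1) fun k => nextPosition (dampedClock Φ l) (deriv Φ) (ψ k)
  have hF : ContDiff ℝ ∞ (dampedClock Φ l : State n × ℝ → _) := contDiff_dampedClock hφ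
  have hσ (t : ℝ) : HasDerivAt (fun t => (xs, t)) (dampedClock Φ l (xs, t)) t := by
    rw [dampedClock, hx.damped_eq_zero]
    exact (hasDerivAt_const t xs).prodMk (hasDerivAt_id t)
  have hsmooth : ∀ k, SmoothAlong (fun t => (xs, t)) (R k) (xs.1 k) := by
    refine fin_two_step_induction (hR0 ▸ smoothAlong_switchedPosition xs 0)
      (hR1 ▸ smoothAlong_switchedPosition xs 1) fun k hk hk' hpred hcur => ?_
    rw [hR k hk hk']
    exact smoothAlong_nextPosition hF hσ hφ (hψ k hk') (hx.force_eq hn hk hk') hpred hcur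
  refine ⟨R, hsmooth, fun k hk hk' t => ?_, ?_, ?_⟩
  · rw [hR k hk hk']
    exact eventually_derivAlong_derivAlong_eq hF hσ hφ (hψ k hk') (hx.force_eq hn hk hk')
      (hsmooth (k - 1)) (hsmooth k) t
  · refine fin_two_step_induction (hR0 ▸ switchedPosition_eventuallyEq_zero xs 0)
      (hR1 ▸ switchedPosition_eventuallyEq_zero xs 1) fun k hk hk' hpred hcur => ?_
    rw [hR k hk hk']
    refine nextPosition_eventuallyEq (hψ k hk').left_inverse (by fun_prop) (by fun_prop)
      (.of_forall fun e => ?_) hpred hcur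
    simp only [derivAlong_position, derivAlong_momentum, damped_snd_of_ne hk hk']
  · refine fin_two_step_induction (hR0 ▸ switchedPosition_eventuallyEq_one xs 0)
      (hR1 ▸ switchedPosition_eventuallyEq_one xs 1) fun k hk hk' hpred hcur => ?_
    rw [hR k hk hk']
    refine nextPosition_eventuallyEq (hψ k hk').left_inverse continuousAt_const
      continuousAt_const (.of_forall fun e => ?_) hpred hcur
    rw [derivAlong_const, derivAlong_const, hx.force_eq hn hk hk', sub_self]

/-- The state whose positions are the values of `R` and whose momenta are their derivatives
along `F`. -/
def chainState {M : Type*} [NormedAddCommGroup M] [NormedSpace ℝ M] (F : M → M)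
    (R : Fin n → M → ℝ) (e : M) : State n :=
  (fun k => R k e, fun k => derivAlong F (R k) e)

lemma step_chainState {M : Type*} [NormedAddCommGroup M] [NormedSpace ℝ M] {F : M → M}
    (hF : ContDiff ℝ 2 F) (hφ : Continuous (deriv Φ)) {R : Fin n → M → ℝ} {T : ℝ} (hT : 0 < T)
    {γ : ℝ → M} (hγ : ∀ t ∈ Icc 0 T, HasDerivWithinAt γ (F (γ t)) (Icc 0 T) t)
    (hR : ∀ t ∈ Icc 0 T, ∀ k, ContDiffAt ℝ 3 (R k) (γ t))
    (hode : ∀ t ∈ Icc 0 T, ∀ k, k ≠ 0 → k ≠ -1 → derivAlong F (derivAlong F (R k)) (γ t) =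
      deriv Φ (R (k - 1) (γ t) - R k (γ t)) - deriv Φ (R k (γ t) - R (k + 1) (γ t))) :
    Step Φ (chainState F R (γ 0)) (chainState F R (γ T)) := by
  have hDR : ∀ t ∈ Icc 0 T, ∀ k, ContDiffAt ℝ 2 (derivAlong F (R k)) (γ t) := fun t ht k =>
    contDiffAt_derivAlong hF (hR t ht k) (by norm_num)
  have hDDR : ∀ t ∈ Icc 0 T, ∀ k, ContDiffAt ℝ 1 (derivAlong F (derivAlong F (R k))) (γ t) :=
    fun t ht k => contDiffAt_derivAlong (hF.of_le (by norm_num)) (hDR t ht k) (by norm_num)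
  refine step_of_hasDerivWithinAt hφ hT (x := fun t => chainState F R (γ t))
    (x' := fun t => chainState F (fun k => derivAlong F (R k)) (γ t))
    (fun t ht => ?_) (fun t ht => ?_) fun t ht => ⟨sub_self _, fun k hk hk' => ?_⟩
  · have hγt := (hγ t ht).continuousWithinAt
    exact (continuousWithinAt_pi.2 fun k =>
      (hDR t ht k).continuousAt.comp_continuousWithinAt hγt).prodMk
      (continuousWithinAt_pi.2 fun k => (hDDR t ht k).continuousAt.comp_continuousWithinAt hγt)
  · exact (hasDerivWithinAt_pi.2 fun k => hasDerivWithinAt_comp_derivAlong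
      ((hR t ht k).differentiableAt (by norm_num)) (hγ t ht)).prodMk
      (hasDerivWithinAt_pi.2 fun k => hasDerivWithinAt_comp_derivAlong
        ((hDR t ht k).differentiableAt (by norm_num)) (hγ t ht))
  · exact sub_eq_zero.2 (hode t ht k hk hk')

namespace SteeringChain

variable {R : Fin n → State n × ℝ → ℝ}

lemma eventually_chainState_zero (h : SteeringChain Φ l xs R) :
    ∀ᶠ z in 𝓝 xs, chainState (dampedClock Φ l) R (z, 0) = z := by
  have hcont : ContinuousAt (fun z : State n => (z, (0 : ℝ))) xs := by fun_prop
  have hR : ∀ᶠ e in 𝓝 (xs, (0 : ℝ)), ∀ k, R k e = e.1.1 k ∧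
      derivAlong (dampedClock Φ l) (R k) e = e.1.2 k := eventually_all.2 fun k => by
    have hD := derivAlong_eventuallyEq (F := dampedClock Φ l) (h.eq_position k)
    rw [derivAlong_position] at hD
    exact (h.eq_position k).and hD
  filter_upwards [hcont.eventually hR] with z hz
  exact Prod.ext (funext fun k => (hz k).1) (funext fun k => (hz k).2)

lemma eventually_chainState_one (h : SteeringChain Φ l xs R) :
    ∀ᶠ z in 𝓝 xs, chainState (dampedClock Φ l) R (z, 1) = (xs.1, 0) := by
  have hcont : ContinuousAt (fun z : State n => (z, (1 : ℝ))) xs := by fun_prop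
  have hR : ∀ᶠ e in 𝓝 (xs, (1 : ℝ)), ∀ k, R k e = xs.1 k ∧
      derivAlong (dampedClock Φ l) (R k) e = 0 := eventually_all.2 fun k => by
    have hD := derivAlong_eventuallyEq (F := dampedClock Φ l) (h.eq_rest k)
    rw [derivAlong_const] at hD
    exact (h.eq_rest k).and hD
  filter_upwards [hcont.eventually hR] with z hz
  exact Prod.ext (funext fun k => (hz k).1) (funext fun k => (hz k).2)

lemma eventually_forall_ode (h : SteeringChain Φ l xs R) :
    ∀ᶠ z in 𝓝 xs, ∀ t ∈ Icc (0 : ℝ) 1, ∀ k, ContDiffAt ℝ 3 (R k) (z, t) ∧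
      (k ≠ 0 → k ≠ -1 →
        derivAlong (dampedClock Φ l) (derivAlong (dampedClock Φ l) (R k)) (z, t) =
          deriv Φ (R (k - 1) (z, t) - R k (z, t)) -
            deriv Φ (R k (z, t) - R (k + 1) (z, t))) := by
  refine isCompact_Icc.eventually_forall_of_forall_eventually fun t _ =>
    eventually_all.2 fun k => ?_
  have hsmooth : ContDiffAt ℝ 3 (R k) (xs, t) :=
    ((h.smoothAlong k).contDiffAt t).of_le ENat.LEInfty.out
  refine (hsmooth.eventually (by simp)).and ?_
  simpa only [eventually_imp_distrib_left] using fun hk hk' => h.ode k hk hk' t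

end SteeringChain

lemma RegularEq.eventually_step (hn : 2 ≤ n) (hφ : ContDiff ℝ ∞ (deriv Φ))
    (hx : RegularEq Φ l xs) : ∀ᶠ z in 𝓝 xs, Step Φ z xs := by
  obtain ⟨R, hR⟩ := hx.exists_steeringChain hn hφ
  obtain ⟨ρ, hρ, hball⟩ :=
    Metric.eventually_nhds_iff.1 (hR.eventually_forall_ode.and hR.eventually_chainState_one)
  have hflow := eventually_exists_solution_dist_lt (contDiff_damped (n := n) (l := l)
    (hφ.of_le (by simp))) zero_le_one continuousOn_const (X := fun _ => xs) (b := fun _ => 0)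
    (fun t _ => by simpa [hx.damped_eq_zero] using hasDerivWithinAt_const t (Icc 0 1) xs) hρ
  filter_upwards [hR.eventually_chainState_zero, hflow]
  rintro _ hstart ⟨Y, rfl, hY⟩
  have hnear := fun t ht => hball (hY t ht).2
  have hγ : ∀ t ∈ Icc (0 : ℝ) 1,
      HasDerivWithinAt (fun t => (Y t, t)) (dampedClock Φ l (Y t, t)) (Icc 0 1) t := fun t ht => by
    simpa [dampedClock] using (hY t ht).1.prodMk (hasDerivWithinAt_id t _)
  have hstep := step_chainState (contDiff_dampedClock (hφ.of_le ENat.LEInfty.out))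
    hφ.continuous one_pos hγ (fun t ht k => ((hnear t ht).1 t ht k).1)
    fun t ht k => ((hnear t ht).1 t ht k).2
  rwa [hstart, (hnear 1 (right_mem_Icc.2 zero_le_one)).2, ← hx.eq_rest] at hstep

end Chain

/-! ### From local to global controllability -/

section Global

variable {n : ℕ}

lemma timeReversal_rest (q : Fin n → ℝ) : timeReversal n (q, 0) = (q, 0) := by
  simp [timeReversal_apply]

variable [NeZero n] {Φ : ℝ → ℝ}

lemma exists_rest_eventually_transGen_step (hn : 2 ≤ n) (hΦ : ConfiningPotential Φ)
    (x : State n) : ∃ q : Fin n → ℝ, ∀ᶠ z in 𝓝 x, Relation.TransGen (Step Φ) z (q, 0) := by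
  obtain ⟨l, hl⟩ := exists_forall_exists_mem_closure_reach_regularEq (n := n) hn hΦ
  obtain ⟨y, hy, hreg⟩ := hl x
  have hstep := hreg.eventually_step hn hΦ.contDiff_deriv
  obtain ⟨w, hw, hxw⟩ := mem_closure_iff_nhds.1 hy _ hstep.eventually_nhds
  refine ⟨y.1, (Reach.eventually (hΦ.contDiff_deriv.of_le (by simp)) hxw hw).mono ?_⟩
  rintro z ⟨w', hw', hzw'⟩
  exact .tail' hzw' (hreg.eq_rest ▸ hw')

/-- By time reversal, reachability between states of rest is an equivalence relation; its classes
are open. -/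
lemma reach_rest (hn : 2 ≤ n) (hΦ : ConfiningPotential Φ) (q q' : Fin n → ℝ) :
    Reach Φ (q, 0) (q', 0) := by
  have hsymm (q q' : Fin n → ℝ) (h : Reach Φ (q, 0) (q', 0)) : Reach Φ (q', 0) (q, 0) := by
    simpa only [timeReversal_rest] using h.reverse
  have : Std.Symm fun q q' : Fin n → ℝ => Reach Φ (q, 0) (q', 0) := ⟨hsymm⟩
  refine PreconnectedSpace.induction₂ (fun q q' : Fin n → ℝ => Reach Φ (q, 0) (q', 0))
    (fun q => ?_) ⟨fun _ _ _ => .trans⟩ q q'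
  obtain ⟨r, hr⟩ := exists_rest_eventually_transGen_step hn hΦ (q, 0)
  have hcont : ContinuousAt (fun q' : Fin n → ℝ => ((q', 0) : State n)) q := by fun_prop
  filter_upwards [hcont.eventually hr] with q' hq'
  exact hr.self_of_nhds.to_reflTransGen.trans (hsymm _ _ hq'.to_reflTransGen)

lemma transGen_step (hn : 2 ≤ n) (hΦ : ConfiningPotential Φ) (a b : State n) :
    Relation.TransGen (Step Φ) a b := by
  obtain ⟨q, hq⟩ := exists_rest_eventually_transGen_step hn hΦ a
  obtain ⟨q', hq'⟩ := exists_rest_eventually_transGen_step hn hΦ (timeReversal n b)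
  have hback : Reach Φ (q', 0) b := by
    simpa only [timeReversal_rest, timeReversal_timeReversal] using
      Reach.reverse hq'.self_of_nhds.to_reflTransGen
  exact hq.self_of_nhds.trans_left ((reach_rest hn hΦ q q').trans hback)

end Global

theorem double_force_global_controllability_general
    (n : ℕ) [NeZero n] (hn : 2 ≤ n) (Φ : ℝ → ℝ) (hΦ : ConfiningPotential Φ)
    (xtil xhat : State n) :
    ∃ (θ : ℝ) (u v : ℝ → ℝ) (x : ℝ → State n),
      0 < θ ∧ Measurable u ∧ Measurable v ∧
      (∃ C : ℝ, ∀ᵐ t : ℝ ∂volume, t ∈ Set.Icc (0:ℝ) θ → |u t| ≤ C ∧ |v t| ≤ C) ∧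
      IsTrajectory2 n Φ θ u v x ∧ x 0 = xtil ∧ x θ = xhat := by
  obtain ⟨θ, hθ, u, v, x, hu, hv, ⟨C, hC⟩, ⟨D, hD⟩, hx, h0, hT⟩ :=
    controlReach_of_transGen hn hΦ.contDiff_deriv.continuous (transGen_step hn hΦ xtil xhat)
  exact ⟨θ, u, v, x, hθ, hu, hv,
    ⟨max C D, .of_forall fun t _ => ⟨le_max_of_le_left (hC t), le_max_of_le_right (hD t)⟩⟩,
    ⟨hx.continuousOn hθ.le, hx.2⟩, h0, hT⟩

/-- Global controllability of the double forced periodic multiparticle system. -/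
theorem double_force_global_controllability
    (n : ℕ) [NeZero n] (hn : 3 ≤ n) (Φ : ℝ → ℝ) (hadm : Admissible Φ)
    (xtil xhat : State n) :
    ∃ (θ : ℝ) (u v : ℝ → ℝ) (x : ℝ → State n),
      0 < θ ∧ Measurable u ∧ Measurable v ∧
      (∃ C : ℝ, ∀ᵐ t : ℝ ∂volume, t ∈ Set.Icc (0:ℝ) θ → |u t| ≤ C ∧ |v t| ≤ C) ∧
      IsTrajectory2 n Φ θ u v x ∧ x 0 = xtil ∧ x θ = xhat :=
  double_force_global_controllability_general n (by omega) Φ hadm.confiningPotential xtil xhat
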